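/- For all integers i, j, k ≥ 0, the identity \sum q^{T_s + T_δ + T_ε + T_{φ-1}} (1 - q^{α} + q^{α+φ}) / ((q)_α (q)_β (q)_γ (q)_δ (q)_ε (q)_φ) = q^{T_i + T_j + T_k} / ((q)_i (q)_j (q)_k) holds as an identity of formal power series in q, where the sum is over all non-negative integers α, β, γ, δ, ε, φ with i = α + δ + ε, j = β + δ + φ, k = γ + ε + φ, and s = α + β + γ + δ + ε + φ. (This is the key identity for Göllnitz's theorem: multiplying by A^i B^j C^k and summing yields (−Aq)_∞ (−Bq)_∞ (−Cq)_∞.) -/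

import Mathlib

open Finset

/-- `(q)_n = (q;q)_n = ∏_{t=0}^{n-1} (1 - q^{t+1})` as a formal power series over `ℚ`. -/
noncomputable def qPochPS (n : ℕ) : PowerSeries ℚ :=
  ∏ t ∈ Finset.range n, (1 - (PowerSeries.X : PowerSeries ℚ) ^ (t + 1))

/-- `T n = n(n+1)/2`, the n-th triangular number.  (With truncated subtraction,
`tri (φ - 1)` for `φ = 0` is `tri 0 = 0`, matching the convention `T_{-1} = 0`.) -/
def tri (n : ℕ) : ℕ := n * (n + 1) / 2

section Aux

variable {F : Type*} [Field F]

/-- `1/(q)_n` extended by zero to negative `n`. -/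
noncomputable def gu (q : F) (n : ℤ) : F :=
  if n < 0 then 0 else (∏ t ∈ Finset.range n.toNat, (1 - q ^ (t + 1)))⁻¹

/-- `q^{T_n}` for integer `n`. -/
noncomputable def gQ (q : F) (n : ℤ) : F := q ^ (n * (n + 1) / 2)

lemma gQ_succ {q : F} (hq : q ≠ 0) (n : ℤ) : gQ q (n + 1) = gQ q n * q ^ (n + 1) := by
  unfold gQ
  rw [← zpow_add₀ hq]
  congr 1
  have : (n + 1) * (n + 1 + 1) = n * (n + 1) + (n + 1) * 2 := by ring
  rw [this, Int.add_mul_ediv_right _ _ (by norm_num)]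

lemma gu_pred {q : F} (h : ∀ n : ℕ, 1 - q ^ (n + 1) ≠ 0) (n : ℤ) :
    gu q (n - 1) = (1 - q ^ n) * gu q n := by
  unfold gu
  rcases lt_trichotomy n 0 with hn | hn | hn
  · rw [if_pos (by omega), if_pos hn]; simp
  · subst hn; simp
  · rw [if_neg (by omega), if_neg (by omega)]
    obtain ⟨m, rfl⟩ : ∃ m : ℕ, n = (m : ℤ) + 1 := ⟨(n - 1).toNat, by omega⟩
    have h1 : ((m : ℤ) + 1 - 1).toNat = m := by omega
    have h2 : ((m : ℤ) + 1).toNat = m + 1 := by omega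
    rw [h1, h2, Finset.prod_range_succ, mul_inv]
    have h3 : q ^ ((m : ℤ) + 1) = q ^ (m + 1) := by exact_mod_cast zpow_natCast q (m + 1)
    rw [h3]
    have := h m
    field_simp

/-- summand without exponent weights -/
noncomputable def gb (q : F) (i j k : ℤ) (p : ℤ × ℤ × ℤ) : F :=
  gu q (i - p.1 - p.2.1) * gu q (j - p.1 - p.2.2) * gu q (k - p.2.1 - p.2.2) *
    gu q p.1 * gu q p.2.1 * gu q p.2.2

lemma gb_eq_zero (q : F) (i j k : ℤ) (p : ℤ × ℤ × ℤ)
    (h : ¬ (0 ≤ p.1 ∧ 0 ≤ p.2.1 ∧ 0 ≤ p.2.2 ∧ p.1 + p.2.1 ≤ i ∧ p.1 + p.2.2 ≤ j ∧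
      p.2.1 + p.2.2 ≤ k)) : gb q i j k p = 0 := by
  have key : ∀ n : ℤ, n < 0 → gu q n = 0 := fun n hn => if_pos hn
  by_contra hne
  apply h
  unfold gb at hne
  simp only [mul_ne_zero_iff] at hne
  obtain ⟨⟨⟨⟨⟨h1, h2⟩, h3⟩, h4⟩, h5⟩, h6⟩ := hne
  have key' : ∀ n : ℤ, gu q n ≠ 0 → 0 ≤ n := fun n hn => by
    by_contra hlt; exact hn (key n (by omega))
  have := key' _ h1
  have := key' _ h2
  have := key' _ h3
  have := key' _ h4
  have := key' _ h5
  have := key' _ h6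
  refine ⟨?_, ?_, ?_, ?_, ?_, ?_⟩ <;> omega

lemma gb_fin (q : F) (i j k : ℤ) (c : ℤ × ℤ × ℤ → F) (f : ℤ × ℤ × ℤ → F)
    (hf : ∀ p, f p = c p * gb q i j k p) : (Function.support f).Finite := by
  apply (((Set.finite_Icc (0:ℤ) i).prod ((Set.finite_Icc (0:ℤ) i).prod
    (Set.finite_Icc (0:ℤ) j)))).subset
  intro p hp
  have : gb q i j k p ≠ 0 := by
    intro h0; apply hp; rw [hf, h0, mul_zero]
  have h := not_imp_comm.1 (gb_eq_zero q i j k p) this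
  obtain ⟨h1, h2, h3, h4, h5, h6⟩ := h
  simp only [Set.mem_prod, Set.mem_Icc]
  omega

/-- weighted summand -/
noncomputable def gt (q : F) (x y w i j k s : ℤ) (p : ℤ × ℤ × ℤ) : F :=
  q ^ (x * p.1 + y * p.2.1 + w * p.2.2) * gQ q (s - p.1 - p.2.1 - p.2.2) *
    gQ q p.1 * gQ q p.2.1 * gQ q p.2.2 * gb q i j k p

lemma gt_fin (q : F) (x y w i j k s : ℤ) :
    (Function.support (gt q x y w i j k s)).Finite :=
  gb_fin q i j k _ _ (fun _ => rfl)

noncomputable def gG (q : F) (x y w i j k s : ℤ) : F := ∑ᶠ p, gt q x y w i j k s p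

lemma shift_sum (f : ℤ × ℤ × ℤ → F) (v : ℤ × ℤ × ℤ) : ∑ᶠ p, f (p + v) = ∑ᶠ p, f p :=
  finsum_comp_equiv (Equiv.addRight v)

lemma split_gen {q : F} {x' y' w' i' j' k' s' : ℤ} {c : F}
    {X Y W I J K S : ℤ} (g : ℤ × ℤ × ℤ → F) (v : ℤ × ℤ × ℤ)
    (h : ∀ p, g (p + v) =
      gt q X Y W I J K S (p + v) + c * gt q x' y' w' i' j' k' s' p) :
    ∑ᶠ p, g p = gG q X Y W I J K S + c * gG q x' y' w' i' j' k' s' := by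
  unfold gG
  rw [← shift_sum g v, ← shift_sum (gt q X Y W I J K S) v,
    mul_finsum, ← finsum_add_distrib]
  · exact finsum_congr h
  · exact (gt_fin q X Y W I J K S).preimage (f := fun p => p + v)
      (add_left_injective v).injOn
  · refine (gt_fin q x' y' w' i' j' k' s').subset ?_
    intro p hp h0
    exact hp (by simp [h0])

lemma gG_split {q : F} {x y w i j k s x' y' w' i' j' k' s' : ℤ} {c : F}
    {X Y W I J K S : ℤ} (v : ℤ × ℤ × ℤ)
    (h : ∀ p, gt q x y w i j k s (p + v) =
      gt q X Y W I J K S (p + v) + c * gt q x' y' w' i' j' k' s' p) :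
    gG q x y w i j k s = gG q X Y W I J K S + c * gG q x' y' w' i' j' k' s' :=
  split_gen _ v h

lemma gG_delta {q : F} (hq : q ≠ 0)
    (h : ∀ n : ℕ, 1 - q ^ (n + 1) ≠ 0) {x y w i j k s x' i' j' s' : ℤ} (hx : x' = x + 1) (hi : i' = i - 1)
    (hj : j' = j - 1) (hs : s' = s - 1) :
    gG q x y w i j k s = gG q x' y w i j k s + q ^ x' * gG q x' y w i' j' k s' := by
  subst hx hi hj hs
  apply gG_split (1, 0, 0)
  rintro ⟨d, e, f⟩
  simp only [gt, gb, Prod.mk_add_mk, add_zero]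
  have e1 : i - 1 - d - e = i - (d + 1) - e := by ring
  have e2 : j - 1 - d - f = j - (d + 1) - f := by ring
  have e3 : s - 1 - d - e - f = s - (d + 1) - e - f := by ring
  have e4 := gu_pred h (d + 1)
  rw [add_sub_cancel_right] at e4
  rw [e1, e2, e3, e4, gQ_succ hq]
  simp only [mul_add, add_mul, zpow_add₀ hq, mul_one, one_mul, zpow_one]
  ring

lemma gG_eps {q : F} (hq : q ≠ 0)
    (h : ∀ n : ℕ, 1 - q ^ (n + 1) ≠ 0) {x y w i j k s y' i' k' s' : ℤ} (hx : y' = y + 1) (hi : i' = i - 1)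
    (hj : k' = k - 1) (hs : s' = s - 1) :
    gG q x y w i j k s = gG q x y' w i j k s + q ^ y' * gG q x y' w i' j k' s' := by
  subst hx hi hj hs
  apply gG_split (0, 1, 0)
  rintro ⟨d, e, f⟩
  simp only [gt, gb, Prod.mk_add_mk, add_zero]
  have e1 : i - 1 - d - e = i - d - (e + 1) := by ring
  have e2 : k - 1 - e - f = k - (e + 1) - f := by ring
  have e3 : s - 1 - d - e - f = s - d - (e + 1) - f := by ring
  have e4 := gu_pred h (e + 1)
  rw [add_sub_cancel_right] at e4
  rw [e1, e2, e3, e4, gQ_succ hq]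
  simp only [mul_add, add_mul, zpow_add₀ hq, mul_one, one_mul, zpow_one]
  ring

lemma gG_phi {q : F} (hq : q ≠ 0)
    (h : ∀ n : ℕ, 1 - q ^ (n + 1) ≠ 0) {x y w i j k s w' j' k' s' : ℤ} (hx : w' = w + 1) (hi : j' = j - 1)
    (hj : k' = k - 1) (hs : s' = s - 1) :
    gG q x y w i j k s = gG q x y w' i j k s + q ^ w' * gG q x y w' i j' k' s' := by
  subst hx hi hj hs
  apply gG_split (0, 0, 1)
  rintro ⟨d, e, f⟩
  simp only [gt, gb, Prod.mk_add_mk, add_zero]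
  have e1 : j - 1 - d - f = j - d - (f + 1) := by ring
  have e2 : k - 1 - e - f = k - e - (f + 1) := by ring
  have e3 : s - 1 - d - e - f = s - d - e - (f + 1) := by ring
  have e4 := gu_pred h (f + 1)
  rw [add_sub_cancel_right] at e4
  rw [e1, e2, e3, e4, gQ_succ hq]
  simp only [mul_add, add_mul, zpow_add₀ hq, mul_one, one_mul, zpow_one]
  ring

lemma gG_alpha {q : F} (hq : q ≠ 0)
    (h : ∀ n : ℕ, 1 - q ^ (n + 1) ≠ 0) {x y w i j k s x' y' i' : ℤ} (hx : x' = x - 1) (hy : y' = y - 1)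
    (hi : i' = i - 1) :
    gG q x y w i j k s = gG q x y w i' j k s + q ^ i * gG q x' y' w i j k s := by
  subst hx hy hi
  apply gG_split (0, 0, 0)
  rintro ⟨d, e, f⟩
  simp only [gt, gb, Prod.mk_add_mk, add_zero]
  have e1 : i - 1 - d - e = i - d - e - 1 := by ring
  rw [e1, gu_pred h (i - d - e)]
  have e2 : q ^ (i) * q ^ ((x - 1) * d + (y - 1) * e + w * f) = q ^ (x * d + y * e + w * f) * q ^ (i - d - e) := by
    rw [← zpow_add₀ hq, ← zpow_add₀ hq]
    congr 1
    ring
  linear_combination (-(gQ q (s - d - e - f) * gQ q d * gQ q e * gQ q f *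
    (gu q (i - d - e) * gu q (j - d - f) * gu q (k - e - f) * gu q d * gu q e * gu q f))) * e2

lemma gG_beta {q : F} (hq : q ≠ 0)
    (h : ∀ n : ℕ, 1 - q ^ (n + 1) ≠ 0) {x y w i j k s x' w' j' : ℤ} (hx : x' = x - 1) (hy : w' = w - 1)
    (hi : j' = j - 1) :
    gG q x y w i j k s = gG q x y w i j' k s + q ^ j * gG q x' y w' i j k s := by
  subst hx hy hi
  apply gG_split (0, 0, 0)
  rintro ⟨d, e, f⟩
  simp only [gt, gb, Prod.mk_add_mk, add_zero]
  have e1 : j - 1 - d - f = j - d - f - 1 := by ring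
  rw [e1, gu_pred h (j - d - f)]
  have e2 : q ^ (j) * q ^ ((x - 1) * d + y * e + (w - 1) * f) = q ^ (x * d + y * e + w * f) * q ^ (j - d - f) := by
    rw [← zpow_add₀ hq, ← zpow_add₀ hq]
    congr 1
    ring
  linear_combination (-(gQ q (s - d - e - f) * gQ q d * gQ q e * gQ q f *
    (gu q (i - d - e) * gu q (j - d - f) * gu q (k - e - f) * gu q d * gu q e * gu q f))) * e2

lemma gG_gamma {q : F} (hq : q ≠ 0)
    (h : ∀ n : ℕ, 1 - q ^ (n + 1) ≠ 0) {x y w i j k s y' w' k' : ℤ} (hx : y' = y - 1) (hy : w' = w - 1)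
    (hi : k' = k - 1) :
    gG q x y w i j k s = gG q x y w i j k' s + q ^ k * gG q x y' w' i j k s := by
  subst hx hy hi
  apply gG_split (0, 0, 0)
  rintro ⟨d, e, f⟩
  simp only [gt, gb, Prod.mk_add_mk, add_zero]
  have e1 : k - 1 - e - f = k - e - f - 1 := by ring
  rw [e1, gu_pred h (k - e - f)]
  have e2 : q ^ (k) * q ^ (x * d + (y - 1) * e + (w - 1) * f) = q ^ (x * d + y * e + w * f) * q ^ (k - e - f) := by
    rw [← zpow_add₀ hq, ← zpow_add₀ hq]
    congr 1
    ring
  linear_combination (-(gQ q (s - d - e - f) * gQ q d * gQ q e * gQ q f *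
    (gu q (i - d - e) * gu q (j - d - f) * gu q (k - e - f) * gu q d * gu q e * gu q f))) * e2

lemma gG_s {q : F} (hq : q ≠ 0) {x y w i j k s x' y' w' s' : ℤ} (hx : x' = x - 1) (hy : y' = y - 1)
    (hw : w' = w - 1) (hs : s = s' + 1) :
    gG q x y w i j k s = q ^ s * gG q x' y' w' i j k s' := by
  subst hx hy hw hs
  unfold gG
  rw [mul_finsum]
  apply finsum_congr
  rintro ⟨d, e, f⟩
  simp only [gt]
  have e1 : s' + 1 - d - e - f = (s' - d - e - f) + 1 := by ring
  rw [e1, gQ_succ hq, ← e1]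
  simp only [sub_mul, zpow_add₀ hq, zpow_sub₀ hq, one_mul]
  have := zpow_ne_zero d hq
  have := zpow_ne_zero e hq
  have := zpow_ne_zero f hq
  field_simp

lemma gG_000 {q : F} (hq : q ≠ 0)
    (h : ∀ n : ℕ, 1 - q ^ (n + 1) ≠ 0) {i j k s i1 i2 j1 k1 s1 s2 : ℤ} (hi1 : i1 = i - 1) (hi2 : i2 = i - 2)
    (hj : j1 = j - 1) (hk : k1 = k - 1) (hs1 : s1 = s - 1) (hs2 : s2 = s - 2) :
    gG q 0 0 0 i j k s = gG q 1 1 0 i j k s + q * gG q 1 1 0 i1 j1 k s1 +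
      q * gG q 1 1 0 i1 j k1 s1 + q ^ 2 * gG q 1 1 0 i2 j1 k1 s2 := by
  have h1 : gG q 0 0 0 i j k s = gG q 1 0 0 i j k s + q ^ (1:ℤ) * gG q 1 0 0 i1 j1 k s1 :=
    gG_delta hq h (by ring) hi1 hj hs1
  have h2 : gG q 1 0 0 i j k s = gG q 1 1 0 i j k s + q ^ (1:ℤ) * gG q 1 1 0 i1 j k1 s1 :=
    gG_eps hq h (by ring) hi1 hk hs1
  have h3 : gG q 1 0 0 i1 j1 k s1 =
      gG q 1 1 0 i1 j1 k s1 + q ^ (1:ℤ) * gG q 1 1 0 i2 j1 k1 s2 :=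
    gG_eps hq h (by ring) (by omega) hk (by omega)
  rw [zpow_one] at *
  rw [h1, h2, h3]; ring

/-- the symmetric form of the left-hand side -/
noncomputable def gS (q : F) (i j k : ℤ) : F :=
  gG q 0 0 0 i j k (i + j + k) + gG q 0 0 0 (i - 1) (j - 1) (k - 1) (i + j + k - 1)

lemma gS_rec {q : F} (hq : q ≠ 0)
    (h : ∀ n : ℕ, 1 - q ^ (n + 1) ≠ 0) (i j k : ℤ) : (1 - q ^ i) * gS q i j k = q ^ i * gS q (i - 1) j k := by
  unfold gS
  obtain ⟨n, hn⟩ : ∃ n, n = i + j + k := ⟨_, rfl⟩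
  have n1 : i - 1 + j + k = n - 1 := by omega
  have n2 : i - 1 - 1 = i - 2 := by omega
  have n3 : n - 1 - 1 = n - 2 := by omega
  rw [n1, ← hn, n2, n3]
  have a1 : gG q 0 0 0 i j k n = _ :=
    gG_000 hq h (i1 := i - 1) (i2 := i - 2) (j1 := j - 1) (k1 := k - 1) (s1 := n - 1)
      (s2 := n - 2) rfl rfl rfl rfl rfl rfl
  have a2 : gG q 0 0 0 (i - 1) (j - 1) (k - 1) (n - 1) = _ :=
    gG_000 hq h (i1 := i - 2) (i2 := i - 3) (j1 := j - 2) (k1 := k - 2) (s1 := n - 2)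
      (s2 := n - 3) (by ring) (by ring) (by ring) (by ring) (by ring) (by ring)
  have a3 : gG q 0 0 0 (i - 1) j k n = _ :=
    gG_000 hq h (i1 := i - 2) (i2 := i - 3) (j1 := j - 1) (k1 := k - 1) (s1 := n - 1)
      (s2 := n - 2) (by ring) (by ring) (by ring) (by ring) (by ring) (by ring)
  have b1 : gG q 1 1 0 i j k n = gG q 1 1 0 (i - 1) j k n + q ^ i * gG q 0 0 0 i j k n :=
    gG_alpha hq h (by ring) (by ring) (by ring)
  have b2 : gG q 1 1 0 (i - 1) (j - 1) (k - 1) (n - 1) =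
      gG q 1 1 0 (i - 2) (j - 1) (k - 1) (n - 1) +
        q ^ (i - 1) * gG q 0 0 0 (i - 1) (j - 1) (k - 1) (n - 1) :=
    gG_alpha hq h (by ring) (by ring) (by ring)
  have b3 : gG q 1 1 0 (i - 1) j k (n - 1) =
      gG q 1 1 0 (i - 2) j k (n - 1) + q ^ (i - 1) * gG q 0 0 0 (i - 1) j k (n - 1) :=
    gG_alpha hq h (by ring) (by ring) (by ring)
  have b4 : gG q 1 1 0 (i - 2) (j - 1) (k - 1) (n - 2) =
      gG q 1 1 0 (i - 3) (j - 1) (k - 1) (n - 2) +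
        q ^ (i - 2) * gG q 0 0 0 (i - 2) (j - 1) (k - 1) (n - 2) :=
    gG_alpha hq h (by ring) (by ring) (by ring)
  have c1 : gG q 0 0 (-1) (i - 1) j k n = gG q 0 0 0 (i - 1) j k n +
      q ^ (0:ℤ) * gG q 0 0 0 (i - 1) (j - 1) (k - 1) (n - 1) :=
    gG_phi hq h (by ring) (by ring) (by ring) (by ring)
  have d0 : gG q 0 0 (-1) (i - 1) j k n = q ^ n * gG q (-1) (-1) (-2) (i - 1) j k (n - 1) :=
    gG_s hq (by ring) (by ring) (by ring) (by ring)
  have d1 : gG q 1 1 0 (i - 1) j k (n - 1) = gG q 1 1 0 (i - 1) j (k - 1) (n - 1) +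
      q ^ k * gG q 1 0 (-1) (i - 1) j k (n - 1) :=
    gG_gamma hq h (by ring) (by ring) (by ring)
  have d2 : gG q 1 1 0 (i - 1) (j - 1) k (n - 1) = gG q 1 1 0 (i - 1) (j - 1) (k - 1) (n - 1) +
      q ^ k * gG q 1 0 (-1) (i - 1) (j - 1) k (n - 1) :=
    gG_gamma hq h (by ring) (by ring) (by ring)
  have d3 : gG q 1 1 0 (i - 2) j k (n - 1) = gG q 1 1 0 (i - 2) j (k - 1) (n - 1) +
      q ^ k * gG q 1 0 (-1) (i - 2) j k (n - 1) :=
    gG_gamma hq h (by ring) (by ring) (by ring)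
  have d4 : gG q 1 1 0 (i - 2) (j - 1) k (n - 1) = gG q 1 1 0 (i - 2) (j - 1) (k - 1) (n - 1) +
      q ^ k * gG q 1 0 (-1) (i - 2) (j - 1) k (n - 1) :=
    gG_gamma hq h (by ring) (by ring) (by ring)
  have d5 : gG q 1 0 (-1) (i - 1) j k (n - 1) = gG q 1 0 (-1) (i - 1) (j - 1) k (n - 1) +
      q ^ j * gG q 0 0 (-2) (i - 1) j k (n - 1) :=
    gG_beta hq h (by ring) (by ring) (by ring)
  have d6 : gG q 1 0 (-1) (i - 2) j k (n - 1) = gG q 1 0 (-1) (i - 2) (j - 1) k (n - 1) +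
      q ^ j * gG q 0 0 (-2) (i - 2) j k (n - 1) :=
    gG_beta hq h (by ring) (by ring) (by ring)
  have d7 : gG q 0 0 (-2) (i - 1) j k (n - 1) = gG q 0 0 (-2) (i - 2) j k (n - 1) +
      q ^ (i - 1) * gG q (-1) (-1) (-2) (i - 1) j k (n - 1) :=
    gG_alpha hq h (by ring) (by ring) (by ring)
  have p1 : q ^ (i - 1) = q ^ i * q⁻¹ := by rw [zpow_sub₀ hq, zpow_one, div_eq_mul_inv]
  have p2 : q ^ (i - 2) = q ^ i * (q⁻¹ * q⁻¹) := by
    rw [zpow_sub₀ hq, zpow_two, div_eq_mul_inv, mul_inv]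
  have p3 : q ^ n = q ^ i * q ^ j * q ^ k := by rw [hn, zpow_add₀ hq, zpow_add₀ hq]
  have r : q * q⁻¹ = 1 := mul_inv_cancel₀ hq
  rw [p1] at b2 b3 d7
  rw [p2] at b4
  rw [p3] at d0
  rw [zpow_zero, one_mul] at c1
  have b2' : q ^ i * gG q 0 0 0 (i - 1) (j - 1) (k - 1) (n - 1) =
      q * (gG q 1 1 0 (i - 1) (j - 1) (k - 1) (n - 1) -
      gG q 1 1 0 (i - 2) (j - 1) (k - 1) (n - 1)) := by
    linear_combination (-q) * b2 - q ^ i * gG q 0 0 0 (i - 1) (j - 1) (k - 1) (n - 1) * r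
  have b3' : q ^ i * gG q 0 0 0 (i - 1) j k (n - 1) =
      q * (gG q 1 1 0 (i - 1) j k (n - 1) - gG q 1 1 0 (i - 2) j k (n - 1)) := by
    linear_combination (-q) * b3 - q ^ i * gG q 0 0 0 (i - 1) j k (n - 1) * r
  have b4' : q ^ i * gG q 0 0 0 (i - 2) (j - 1) (k - 1) (n - 2) =
      q ^ 2 * (gG q 1 1 0 (i - 2) (j - 1) (k - 1) (n - 2) -
        gG q 1 1 0 (i - 3) (j - 1) (k - 1) (n - 2)) := by
    linear_combination (-q ^ 2) * b4 -
      q ^ i * gG q 0 0 0 (i - 2) (j - 1) (k - 1) (n - 2) * (1 + q * q⁻¹) * r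
  have d8 : gG q 0 0 (-1) (i - 1) j k n = q * (q ^ k * (q ^ j * (gG q 0 0 (-2) (i - 1) j k (n - 1)
      - gG q 0 0 (-2) (i - 2) j k (n - 1)))) := by
    linear_combination d0 - q * q ^ k * q ^ j * d7 -
      q ^ i * q ^ j * q ^ k * gG q (-1) (-1) (-2) (i - 1) j k (n - 1) * r
  linear_combination a1 - a3 + b1 - b2' - b3' - b4' - c1 + d8 -
    q * (d1 - d2 - d3 + d4) - q * q ^ k * (d5 - d6)

lemma gG_swap1 {q : F} (i j k s : ℤ) : gG q 0 0 0 i j k s = gG q 0 0 0 j i k s := by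
  unfold gG
  let E : ℤ × ℤ × ℤ ≃ ℤ × ℤ × ℤ := (Equiv.refl ℤ).prodCongr (Equiv.prodComm ℤ ℤ)
  rw [← finsum_comp_equiv E]
  apply finsum_congr
  rintro ⟨d, e, f⟩
  have hE : E (d, e, f) = (d, f, e) := rfl
  rw [hE]
  simp only [gt, gb]
  rw [show s - d - f - e = s - d - e - f by ring, show k - f - e = k - e - f by ring]
  simp only [zero_mul]
  ring

lemma gG_swap2 {q : F} (i j k s : ℤ) : gG q 0 0 0 i j k s = gG q 0 0 0 i k j s := by
  unfold gG
  let E : ℤ × ℤ × ℤ ≃ ℤ × ℤ × ℤ :=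
    ⟨fun p => (p.2.1, p.1, p.2.2), fun p => (p.2.1, p.1, p.2.2), fun _ => rfl, fun _ => rfl⟩
  rw [← finsum_comp_equiv E]
  apply finsum_congr
  rintro ⟨d, e, f⟩
  have hE : E (d, e, f) = (e, d, f) := rfl
  rw [hE]
  simp only [gt, gb]
  rw [show s - e - d - f = s - d - e - f by ring, show i - e - d = i - d - e by ring]
  simp only [zero_mul]
  ring

lemma gS_swap1 {q : F} (i j k : ℤ) : gS q i j k = gS q j i k := by
  unfold gS
  rw [gG_swap1 i, gG_swap1 (i - 1), add_comm i j]

lemma gS_swap2 {q : F} (i j k : ℤ) : gS q i j k = gS q i k j := by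
  unfold gS
  rw [gG_swap2 i, gG_swap2 (i - 1), add_right_comm i j k]

lemma gS_i {q : F} (hq : q ≠ 0)
    (h : ∀ n : ℕ, 1 - q ^ (n + 1) ≠ 0) (i : ℕ) (j k : ℤ) : gS q i j k = gQ q i * gu q i * gS q 0 j k := by
  induction i with
  | zero => simp [gQ, gu]
  | succ m ih =>
    have h1 := gS_rec hq h ((m : ℤ) + 1) j k
    have h2 := gu_pred h ((m : ℤ) + 1)
    rw [add_sub_cancel_right] at h1 h2
    have h3 : (1 - q ^ ((m : ℤ) + 1)) ≠ 0 := by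
      have := h m
      rwa [← zpow_natCast, Nat.cast_add, Nat.cast_one] at this
    push_cast
    apply mul_left_cancel₀ h3
    rw [h1, ih, h2, gQ_succ hq]
    ring

lemma gS_zero {q : F} : gS q 0 0 0 = 1 := by
  have key : ∀ (i j k s : ℤ), ∀ p : ℤ × ℤ × ℤ, gb q i j k p = 0 →
      gt q 0 0 0 i j k s p = 0 := by
    intro i j k s p hp
    rw [gt, hp, mul_zero]
  unfold gS gG
  rw [finsum_eq_single _ (0, 0, 0), finsum_eq_zero_of_forall_eq_zero]
  · simp [gt, gb, gQ, gu]
  · intro p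
    apply key
    apply gb_eq_zero
    omega
  · rintro ⟨d, e, f⟩ hp
    apply key
    apply gb_eq_zero
    simp only
    intro hh
    apply hp
    simp only [Prod.mk.injEq]
    omega

lemma gS_closed {q : F} (hq : q ≠ 0)
    (h : ∀ n : ℕ, 1 - q ^ (n + 1) ≠ 0) (i j k : ℕ) :
    gS q i j k = gQ q i * gQ q j * gQ q k * (gu q i * gu q j * gu q k) := by
  rw [gS_i hq h, gS_swap1, gS_i hq h, gS_swap2, gS_swap1, gS_i hq h, gS_zero]
  ring

/-- the original summand over integer triples -/
noncomputable def go (q : F) (i j k : ℤ) (p : ℤ × ℤ × ℤ) : F :=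
  gQ q (i + j + k - p.1 - p.2.1 - p.2.2) * gQ q p.1 * gQ q p.2.1 * gQ q (p.2.2 - 1) *
    (1 - q ^ (i - p.1 - p.2.1) + q ^ (i - p.1 - p.2.1) * q ^ p.2.2) * gb q i j k p

lemma go_sum {q : F} (hq : q ≠ 0)
    (h : ∀ n : ℕ, 1 - q ^ (n + 1) ≠ 0) (i j k : ℕ) : ∑ᶠ p, go q i j k p =
    gQ q i * gQ q j * gQ q k * (gu q i * gu q j * gu q k) := by
  rw [← gS_closed hq h, gS, ← one_mul (gG q 0 0 0 ((i:ℤ) - 1) _ _ _)]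
  apply split_gen _ (0, 0, 1)
  rintro ⟨d, e, f⟩
  simp only [go, gt, gb, Prod.mk_add_mk, add_zero]
  generalize (i : ℤ) = i
  generalize (j : ℤ) = j
  generalize (k : ℤ) = k
  have e1 : j - 1 - d - f = j - d - (f + 1) := by ring
  have e2 : k - 1 - e - f = k - e - (f + 1) := by ring
  have e3 : i + j + k - 1 - d - e - f = i + j + k - d - e - (f + 1) := by ring
  have e5 : i - 1 - d - e = i - d - e - 1 := by ring
  have e4 := gu_pred h (f + 1)
  rw [add_sub_cancel_right] at e4
  rw [e1, e2, e3, e5, e4, gu_pred h (i - d - e), gQ_succ hq, add_sub_cancel_right]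
  simp only [zero_mul, add_zero, zpow_zero]
  ring

end Aux

lemma gu_map (n : ℕ) :
    gu (algebraMap (PowerSeries ℚ) (FractionRing (PowerSeries ℚ)) PowerSeries.X) n =
      (algebraMap (PowerSeries ℚ) (FractionRing (PowerSeries ℚ)) (qPochPS n))⁻¹ := by
  unfold gu qPochPS
  rw [if_neg (by omega)]
  simp

lemma gQ_map {F : Type*} [Field F] (q : F) (n : ℕ) : gQ q n = q ^ tri n := by
  unfold gQ tri
  rw [← zpow_natCast]
  norm_cast

lemma gQ_map' {F : Type*} [Field F] (q : F) (n : ℕ) : gQ q ((n : ℤ) - 1) = q ^ tri (n - 1) := by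
  cases n with
  | zero => simp [gQ, tri]
  | succ m => rw [← gQ_map]; simp

lemma qPoch_const (n : ℕ) : PowerSeries.constantCoeff (qPochPS n) = 1 := by
  unfold qPochPS
  simp [map_prod]

lemma map_inv_ps (P : PowerSeries ℚ) (hP : PowerSeries.constantCoeff P = 1) :
    algebraMap (PowerSeries ℚ) (FractionRing (PowerSeries ℚ)) P⁻¹ =
      (algebraMap (PowerSeries ℚ) (FractionRing (PowerSeries ℚ)) P)⁻¹ := by
  apply eq_inv_of_mul_eq_one_left
  rw [← map_mul, PowerSeries.inv_mul_cancel P (by rw [hP]; exact one_ne_zero), map_one]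

lemma curry6 {M : Type*} [AddCommMonoid M] (f : ℕ → ℕ → ℕ → ℕ → ℕ → ℕ → M) (N : ℕ)
    (hf : ∀ a b c d e g, (N < a ∨ N < b ∨ N < c ∨ N < d ∨ N < e ∨ N < g) →
      f a b c d e g = 0) :
    ∑ᶠ (a : ℕ) (b : ℕ) (c : ℕ) (d : ℕ) (e : ℕ) (g : ℕ), f a b c d e g =
      ∑ᶠ p : ℕ × ℕ × ℕ × ℕ × ℕ × ℕ,
        f p.1 p.2.1 p.2.2.1 p.2.2.2.1 p.2.2.2.2.1 p.2.2.2.2.2 := by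
  have I := Set.finite_Iic N
  rw [finsum_curry]
  · apply finsum_congr; intro a
    rw [finsum_curry]
    · apply finsum_congr; intro b
      rw [finsum_curry]
      · apply finsum_congr; intro c
        rw [finsum_curry]
        · apply finsum_congr; intro d
          rw [finsum_curry]
          apply (I.prod I).subset
          rintro ⟨x1, x2⟩ hx
          by_contra hn
          apply hx
          apply hf
          simp only [Set.mem_prod, Set.mem_Iic] at hn ⊢
          omega
        · apply (I.prod (I.prod I)).subset
          rintro ⟨x1, x2, x3⟩ hx
          by_contra hn
          apply hx
          apply hf
          simp only [Set.mem_prod, Set.mem_Iic] at hn ⊢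
          omega
      · apply (I.prod (I.prod (I.prod I))).subset
        rintro ⟨x1, x2, x3, x4⟩ hx
        by_contra hn
        apply hx
        apply hf
        simp only [Set.mem_prod, Set.mem_Iic] at hn ⊢
        omega
    · apply (I.prod (I.prod (I.prod (I.prod I)))).subset
      rintro ⟨x1, x2, x3, x4, x5⟩ hx
      by_contra hn
      apply hx
      apply hf
      simp only [Set.mem_prod, Set.mem_Iic] at hn ⊢
      omega
  · apply (I.prod (I.prod (I.prod (I.prod (I.prod I))))).subset
    rintro ⟨x1, x2, x3, x4, x5, x6⟩ hx
    by_contra hn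
    apply hx
    apply hf
    simp only [Set.mem_prod, Set.mem_Iic] at hn ⊢
    omega

/-- The key identity (6.1) for Göllnitz's theorem, at the level of coefficients of
`A^i B^j C^k`: for `i, j, k ≥ 0`,
`∑ q^{T_s + T_δ + T_ε + T_{φ-1}} (1 - q^α + q^{α+φ}) / ((q)_α (q)_β (q)_γ (q)_δ (q)_ε (q)_φ)
  = q^{T_i + T_j + T_k} / ((q)_i (q)_j (q)_k)`,
the sum being over all non-negative `α, β, γ, δ, ε, φ` with `i = α + δ + ε`,
`j = β + δ + φ`, `k = γ + ε + φ`, where `s = α + β + γ + δ + ε + φ`. -/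
theorem gollnitz_key_identity (i j k : ℕ) :
    (∑ᶠ (α : ℕ) (β : ℕ) (γ : ℕ) (δ : ℕ) (ε : ℕ) (φ : ℕ),
      if α + δ + ε = i ∧ β + δ + φ = j ∧ γ + ε + φ = k then
        (PowerSeries.X : PowerSeries ℚ) ^
            (tri (α + β + γ + δ + ε + φ) + tri δ + tri ε + tri (φ - 1)) *
          (1 - (PowerSeries.X : PowerSeries ℚ) ^ α +
            (PowerSeries.X : PowerSeries ℚ) ^ (α + φ)) *
          (qPochPS α * qPochPS β * qPochPS γ * qPochPS δ * qPochPS ε * qPochPS φ)⁻¹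
      else 0) =
    (PowerSeries.X : PowerSeries ℚ) ^ (tri i + tri j + tri k) *
      (qPochPS i * qPochPS j * qPochPS k)⁻¹ := by
  rw [curry6 _ (i + j + k)]
  swap
  · intro a b c d e g hh
    rw [if_neg]
    omega
  have inj : Function.Injective
      (algebraMap (PowerSeries ℚ) (FractionRing (PowerSeries ℚ))) :=
    IsFractionRing.injective _ _
  apply inj
  have hm := AddMonoidHom.map_finsum_of_injective
    (algebraMap (PowerSeries ℚ) (FractionRing (PowerSeries ℚ))).toAddMonoidHom inj
    (fun p : ℕ × ℕ × ℕ × ℕ × ℕ × ℕ =>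
      if p.1 + p.2.2.2.1 + p.2.2.2.2.1 = i ∧ p.2.1 + p.2.2.2.1 + p.2.2.2.2.2 = j ∧
          p.2.2.1 + p.2.2.2.2.1 + p.2.2.2.2.2 = k then
        (PowerSeries.X : PowerSeries ℚ) ^
            (tri (p.1 + p.2.1 + p.2.2.1 + p.2.2.2.1 + p.2.2.2.2.1 + p.2.2.2.2.2) +
              tri p.2.2.2.1 + tri p.2.2.2.2.1 + tri (p.2.2.2.2.2 - 1)) *
          (1 - (PowerSeries.X : PowerSeries ℚ) ^ p.1 +
            (PowerSeries.X : PowerSeries ℚ) ^ (p.1 + p.2.2.2.2.2)) *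
          (qPochPS p.1 * qPochPS p.2.1 * qPochPS p.2.2.1 * qPochPS p.2.2.2.1 *
            qPochPS p.2.2.2.2.1 * qPochPS p.2.2.2.2.2)⁻¹
      else 0)
  refine hm.trans ?_
  clear hm
  set q : FractionRing (PowerSeries ℚ) :=
    algebraMap (PowerSeries ℚ) (FractionRing (PowerSeries ℚ)) PowerSeries.X with hqdef
  have hq : q ≠ 0 := by
    rw [hqdef, Ne, map_eq_zero_iff _ inj]
    exact PowerSeries.X_ne_zero
  have h : ∀ n : ℕ, 1 - q ^ (n + 1) ≠ 0 := by
    intro n hn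
    rw [hqdef, ← map_pow, ← map_one (algebraMap (PowerSeries ℚ) (FractionRing (PowerSeries ℚ))),
      ← map_sub, map_eq_zero_iff _ inj] at hn
    have := congrArg PowerSeries.constantCoeff hn
    simp at this
  have hR : (algebraMap (PowerSeries ℚ) (FractionRing (PowerSeries ℚ)))
      ((PowerSeries.X : PowerSeries ℚ) ^ (tri i + tri j + tri k) *
        (qPochPS i * qPochPS j * qPochPS k)⁻¹) = ∑ᶠ p, go q i j k p := by
    rw [go_sum hq h, map_mul, map_inv_ps _ (by simp [qPoch_const]), gQ_map, gQ_map, gQ_map,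
      hqdef, gu_map, gu_map, gu_map, map_pow, map_mul, map_mul, mul_inv, mul_inv, pow_add, pow_add]
  rw [hR]
  let A : Set (ℕ × ℕ × ℕ × ℕ × ℕ × ℕ) := {p | p.1 + p.2.2.2.1 + p.2.2.2.2.1 = i ∧
    p.2.1 + p.2.2.2.1 + p.2.2.2.2.2 = j ∧ p.2.2.1 + p.2.2.2.2.1 + p.2.2.2.2.2 = k}
  let B : Set (ℤ × ℤ × ℤ) := {p | 0 ≤ p.1 ∧ 0 ≤ p.2.1 ∧ 0 ≤ p.2.2 ∧ p.1 + p.2.1 ≤ i ∧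
    p.1 + p.2.2 ≤ j ∧ p.2.1 + p.2.2 ≤ k}
  have hB : ∑ᶠ p, go q i j k p = ∑ᶠ p ∈ B, go q i j k p := by
    apply finsum_congr
    intro p
    by_cases hp : p ∈ B
    · simp [hp]
    · simp only [hp, finsum_false]
      rw [go, gb_eq_zero _ _ _ _ _ hp, mul_zero]
  rw [hB]
  have hA : ∀ f : ℕ × ℕ × ℕ × ℕ × ℕ × ℕ → FractionRing (PowerSeries ℚ),
      (∀ p, p ∉ A → f p = 0) → ∑ᶠ p, f p = ∑ᶠ p ∈ A, f p := by
    intro f hf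
    apply finsum_congr
    intro p
    by_cases hp : p ∈ A
    · simp [hp]
    · simp only [hp, finsum_false]
      exact hf p hp
  rw [hA]
  swap
  · intro p hp
    rw [if_neg (by exact hp)]
    exact map_zero _
  apply finsum_mem_eq_of_bijOn
    (fun p => ((p.2.2.2.1 : ℤ), (p.2.2.2.2.1 : ℤ), (p.2.2.2.2.2 : ℤ)))
  · refine ⟨?_, ?_, ?_⟩
    · rintro ⟨a, b, c, d, e, f⟩ ⟨h1, h2, h3⟩
      simp only at h1 h2 h3
      refine ⟨?_, ?_, ?_, ?_, ?_, ?_⟩ <;> simp only <;> omega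
    · rintro ⟨a, b, c, d, e, f⟩ ⟨h1, h2, h3⟩ ⟨a', b', c', d', e', f'⟩ ⟨h1', h2', h3'⟩ hh
      simp only [Prod.mk.injEq] at *
      omega
    · rintro ⟨d, e, f⟩ ⟨h1, h2, h3, h4, h5, h6⟩
      simp only at h1 h2 h3 h4 h5 h6
      refine ⟨((i - d - e).toNat, (j - d - f).toNat, (k - e - f).toNat, d.toNat, e.toNat,
        f.toNat), ⟨?_, ?_, ?_⟩, ?_⟩
      · simp only; omega
      · simp only; omega
      · simp only; omega
      · simp only [Prod.mk.injEq]; omega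
  · rintro ⟨a, b, c, d, e, f⟩ hp
    rw [if_pos (by exact hp)]
    obtain ⟨h1, h2, h3⟩ := hp
    simp only at h1 h2 h3
    simp only [go, gb]
    have r1 : (i : ℤ) - d - e = (a : ℕ) := by omega
    have r2 : (j : ℤ) - d - f = (b : ℕ) := by omega
    have r3 : (k : ℤ) - e - f = (c : ℕ) := by omega
    have r4 : (i : ℤ) + j + k - d - e - f = ((a + b + c + d + e + f : ℕ) : ℤ) := by
      push_cast; omega
    rw [r1, r2, r3, r4, gQ_map, gQ_map, gQ_map, gQ_map', hqdef]
    simp only [gu_map, zpow_natCast]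
    rw [RingHom.toAddMonoidHom_eq_coe, AddMonoidHom.coe_coe, map_mul, map_inv_ps _ (by simp [qPoch_const])]
    simp only [map_mul, map_add, map_sub, map_one, map_pow, mul_inv, pow_add]
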